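/- Let N, m ∈ ℕ with 1 ≤ m < N, let 0 < p ≤ 1 and p < q ≤ ∞. Then the Gelfand m-width of the ℓ^p quasi-norm unit ball B^p_N in ℓ^q_N satisfies d^m(B^p_N, ℓ^q_N) ≥ (1/2)^{2/p − 1/q} · ( min{ 1, (2p/log(3^8·e)) · log(e·N/m) / m } )^{1/p − 1/q}. -/

import Mathlib

open Finset
open scoped ENNReal

noncomputable section

/-- The weighted `ℓ^p` (quasi-)norm on `ℝ^N` with positive weights `w` and exponent
`p ∈ (0,∞]`: `‖x‖_{p,w} = (∑ i, (|x i| / w i)^p)^(1/p)` for `p < ∞`, and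
`sup_i |x i| / w i` for `p = ∞`. -/
def wnorm {N : ℕ} (p : ℝ≥0∞) (w : Fin N → ℝ) (x : Fin N → ℝ) : ℝ :=
  if p = ⊤ then ⨆ i, |x i| / w i
  else (∑ i, (|x i| / w i) ^ p.toReal) ^ (1 / p.toReal)

/-- The weighted `ℓ^p` unit ball `B^p_N(w)` in `ℝ^N`. -/
def wball {N : ℕ} (p : ℝ≥0∞) (w : Fin N → ℝ) : Set (Fin N → ℝ) :=
  {x | wnorm p w x ≤ 1}

/-- The Kolmogorov `m`-width of a subset `K` of `ℝ^N` equipped with the norm `nrm`. -/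
def kolWidth {N : ℕ} (m : ℕ) (K : Set (Fin N → ℝ)) (nrm : (Fin N → ℝ) → ℝ) : ℝ :=
  sInf { r | ∃ X : Submodule ℝ (Fin N → ℝ), Module.finrank ℝ X ≤ m ∧
    r = ⨆ x : K, ⨅ z : X, nrm ((x : Fin N → ℝ) - (z : Fin N → ℝ)) }

/-- The Gelfand `m`-width of a subset `K` of `ℝ^N` equipped with the norm `nrm`:
the infimum over linear maps `A : ℝ^N → ℝ^m` of `sup { nrm x : x ∈ K ∩ ker A }`
(equivalently, the infimum over subspaces of codimension at most `m`). -/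
def gelWidth {N : ℕ} (m : ℕ) (K : Set (Fin N → ℝ)) (nrm : (Fin N → ℝ) → ℝ) : ℝ :=
  sInf { r | ∃ A : (Fin N → ℝ) →ₗ[ℝ] (Fin m → ℝ),
    r = ⨆ x : (K ∩ (LinearMap.ker A : Set (Fin N → ℝ)) : Set (Fin N → ℝ)),
          nrm (x : Fin N → ℝ) }

/-!
Suppose that on the kernel of `A : ℝ^N → ℝ^m` the `ℓ^q` norm, relative to the `ℓ^p` quasi-norm, is
smaller than the claimed bound. Let `μ` be the minimum in that bound and `s` the integer part of
`1 / μ`. By Hölder's inequality, `2s` coordinates of a nonzero kernel vector carry less than half of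
its `p`-th power sum: this is the `ℓ^p` null space property of order `2s`. Two consequences of it
contradict the choice of `s`.

* The kernel contains a nonzero vector supported on `m + 1` coordinates. If `m + 1 ≤ 4s`, these
  split into two sets of at most `2s` coordinates, one of which carries half of the power sum. So
  `4s ≤ m`.
* A maximal family of `s`-subsets of the coordinates with pairwise intersections smaller than
  `s / 2` has at least `(N / 4s)^(s / 2)` members. Differences of their indicator vectors are
  `2s`-sparse, hence minimal modulo the kernel, so the indicators stay separated in the quotient
  `ℝ^N / ker A`. A volume comparison in this quotient, whose dimension is at most `m`, allows at
  most `3^(m / p)` such points.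
-/

open scoped symmDiff Pointwise

lemma choose_mul_pow_le_pow_mul_choose {s n : ℕ} (hsn : s ≤ n) (k : ℕ) :
    s.choose k * n ^ k ≤ s ^ k * n.choose k := by
  have hdesc : s.descFactorial k * n ^ k ≤ s ^ k * n.descFactorial k := by
    induction k with
    | zero => simp
    | succ k ih =>
      have hfactor : (s - k) * n ≤ s * (n - k) := by
        rw [Nat.sub_mul, Nat.mul_sub, mul_comm s k]
        exact Nat.sub_le_sub_left (Nat.mul_le_mul_left k hsn) _
      calc s.descFactorial (k + 1) * n ^ (k + 1)
          = ((s - k) * n) * (s.descFactorial k * n ^ k) := by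
            rw [Nat.descFactorial_succ]; ring
        _ ≤ (s * (n - k)) * (s ^ k * n.descFactorial k) := Nat.mul_le_mul hfactor ih
        _ = s ^ (k + 1) * n.descFactorial (k + 1) := by
            rw [Nat.descFactorial_succ]; ring
  refine Nat.le_of_mul_le_mul_left ?_ (Nat.factorial_pos k)
  simpa only [Nat.descFactorial_eq_factorial_mul_choose, mul_assoc, mul_left_comm] using hdesc

lemma exists_sized_family_covering {α : Type*} [Finite α] [DecidableEq α] {s k : ℕ} (hks : k ≤ s) :
    ∃ F : Finset (Finset α), (F : Set (Finset α)).Sized s ∧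
      (F : Set (Finset α)).Pairwise (fun S T => #(S ∩ T) < k) ∧
      ∀ T, #T = s → ∃ S ∈ F, k ≤ #(S ∩ T) := by
  obtain ⟨F, -, hF⟩ := Finite.exists_le_maximal (a := ∅)
    (p := fun F : Finset (Finset α) => (F : Set (Finset α)).Sized s ∧
      (F : Set (Finset α)).Pairwise fun S T => #(S ∩ T) < k) (by simp [Set.Sized])
  refine ⟨F, hF.prop.1, hF.prop.2, fun T hT => ?_⟩
  by_contra! hfar
  have hins : T ∈ F := by
    refine hF.le_of_ge ⟨?_, ?_⟩ (Finset.subset_insert T F) (Finset.mem_insert_self T F)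
    · rw [coe_insert]
      rintro S (rfl | hS)
      exacts [hT, hF.prop.1 hS]
    · rw [coe_insert]
      refine hF.prop.2.insert fun S hS _ => ⟨?_, hfar S hS⟩
      rw [inter_comm]
      exact hfar S hS
  have := hfar T hins
  rw [inter_self] at this
  omega

section SubsetFamilies

variable {α : Type*} [Fintype α] [DecidableEq α] {s k : ℕ}

lemma card_filter_le_card_inter_le (hks : k ≤ s) (S : Finset α) :
    #{T ∈ powersetCard s univ | k ≤ #(S ∩ T)} ≤
      (#S).choose k * (Fintype.card α - k).choose (s - k) := by
  have hcover : ({T ∈ powersetCard s univ | k ≤ #(S ∩ T)} : Finset (Finset α)) ⊆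
      (powersetCard k S).biUnion fun U => {T ∈ powersetCard s univ | U ⊆ T} := by
    intro T hT
    obtain ⟨hTs, hkT⟩ := mem_filter.1 hT
    obtain ⟨U, hU, hUk⟩ := exists_subset_card_eq hkT
    exact mem_biUnion.2 ⟨U, mem_powersetCard.2 ⟨hU.trans inter_subset_left, hUk⟩,
      mem_filter.2 ⟨hTs, hU.trans inter_subset_right⟩⟩
  refine (card_le_card hcover).trans ?_
  rw [← card_powersetCard k S]
  refine card_biUnion_le_card_mul _ _ _ fun U hU => ?_
  have hUk := (mem_powersetCard.1 hU).2
  rw [card_filter_powersetCard_subset U univ s (subset_univ U) (hUk.trans_le hks), hUk, card_univ]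

lemma choose_le_card_mul_choose_sq_of_covering (hks : k ≤ s) (hs : s ≤ Fintype.card α)
    {F : Finset (Finset α)} (hF : (F : Set (Finset α)).Sized s)
    (hcover : ∀ T : Finset α, #T = s → ∃ S ∈ F, k ≤ #(S ∩ T)) :
    (Fintype.card α).choose k ≤ #F * s.choose k ^ 2 := by
  set n := Fintype.card α with hn
  have hcount : n.choose s ≤ #F * (s.choose k * (n - k).choose (s - k)) := by
    have hsub : powersetCard s univ ⊆
        F.biUnion fun S => {T ∈ powersetCard s univ | k ≤ #(S ∩ T)} := fun T hT => by
      obtain ⟨S, hS, hST⟩ := hcover T (mem_powersetCard_univ.1 hT)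
      exact mem_biUnion.2 ⟨S, hS, mem_filter.2 ⟨hT, hST⟩⟩
    rw [hn, ← card_univ, ← card_powersetCard]
    refine (card_le_card hsub).trans (card_biUnion_le_card_mul _ _ _ fun S hS => ?_)
    simpa only [hF hS, card_univ] using card_filter_le_card_inter_le hks S
  refine Nat.le_of_mul_le_mul_left ?_ (Nat.choose_pos hs)
  calc n.choose s * n.choose k
      ≤ (#F * (s.choose k * (n - k).choose (s - k))) * n.choose k := Nat.mul_le_mul_right _ hcount
    _ = #F * s.choose k * (n.choose k * (n - k).choose (s - k)) := by ring
    _ = n.choose s * (#F * s.choose k ^ 2) := by rw [← Nat.choose_mul hks]; ring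

lemma exists_sized_family_card_pow_le (hks : k ≤ s) (hs : s ≤ Fintype.card α) :
    ∃ F : Finset (Finset α), (F : Set (Finset α)).Sized s ∧
      (F : Set (Finset α)).Pairwise (fun S T => #(S ∩ T) < k) ∧
      Fintype.card α ^ k ≤ s ^ k * (#F * 2 ^ s) := by
  obtain ⟨F, hsized, hpair, hcover⟩ := exists_sized_family_covering (α := α) hks
  refine ⟨F, hsized, hpair, Nat.le_of_mul_le_mul_left ?_ (Nat.choose_pos hks)⟩
  calc s.choose k * Fintype.card α ^ k
      ≤ s ^ k * (Fintype.card α).choose k := choose_mul_pow_le_pow_mul_choose hs k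
    _ ≤ s ^ k * (#F * s.choose k ^ 2) := by
        gcongr
        exact choose_le_card_mul_choose_sq_of_covering hks hs hsized hcover
    _ = s.choose k * (s ^ k * (#F * s.choose k)) := by ring
    _ ≤ s.choose k * (s ^ k * (#F * 2 ^ s)) := by
        gcongr
        exact Nat.choose_le_two_pow s k

theorem exists_sized_family_rpow_le_card (hs0 : 0 < s) (hs : s ≤ Fintype.card α) :
    ∃ F : Finset (Finset α), (F : Set (Finset α)).Sized s ∧
      (F : Set (Finset α)).Pairwise (fun S T => 2 * #(S ∩ T) < s) ∧
      (Fintype.card α / (4 * s) : ℝ) ^ (s / 2 : ℝ) ≤ #F := by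
  obtain ⟨F, hsized, hpair, hcard⟩ :=
    exists_sized_family_card_pow_le (α := α) (s := s) (k := (s + 1) / 2) (by omega) hs
  refine ⟨F, hsized, hpair.imp fun S T hST => by omega, ?_⟩
  have hsR : (0 : ℝ) < s := by exact_mod_cast hs0
  have hratio : (1 : ℝ) ≤ Fintype.card α / s := (one_le_div hsR).2 (by exact_mod_cast hs)
  have hk : (s / 2 : ℝ) ≤ ((s + 1) / 2 : ℕ) := by
    have : s ≤ 2 * ((s + 1) / 2) := by omega
    rw [div_le_iff₀ two_pos, mul_comm]
    exact_mod_cast this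
  have hfour : (4 : ℝ) ^ (s / 2 : ℝ) = 2 ^ s := by
    rw [show (4 : ℝ) = 2 ^ (2 : ℝ) by norm_num, ← Real.rpow_mul zero_le_two,
      mul_div_cancel₀ _ two_ne_zero, Real.rpow_natCast]
  rw [mul_comm, ← div_div, Real.div_rpow (by positivity) (by norm_num), hfour,
    div_le_iff₀ (by positivity)]
  calc (Fintype.card α / s : ℝ) ^ (s / 2 : ℝ)
      ≤ (Fintype.card α / s : ℝ) ^ (((s + 1) / 2 : ℕ) : ℝ) :=
        Real.rpow_le_rpow_of_exponent_le hratio hk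
    _ ≤ #F * 2 ^ s := by
        rw [Real.rpow_natCast, div_pow, div_le_iff₀ (by positivity), mul_comm]
        exact_mod_cast hcard

end SubsetFamilies

/-- The `p`-th power `∑ i, |x i| ^ p` of the `ℓ^p` quasi-norm. For `p ≤ 1` this power, unlike the
quasi-norm itself, is subadditive, so that estimates are carried out for it. -/
def powSum {ι : Type*} [Fintype ι] (p : ℝ) (x : ι → ℝ) : ℝ := ∑ i, |x i| ^ p

/-- The unit ball of the `ℓ^p` quasi-norm. -/
def lpBall (ι : Type*) [Fintype ι] (p : ℝ) : Set (ι → ℝ) := {x | powSum p x ^ (1 / p) ≤ 1}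

section PowSum

variable {ι : Type*} [Fintype ι] {p : ℝ}

lemma powSum_nonneg (p : ℝ) (x : ι → ℝ) : 0 ≤ powSum p x :=
  sum_nonneg fun _ _ => by positivity

lemma powSum_pos {x : ι → ℝ} (hx : x ≠ 0) : 0 < powSum p x := by
  obtain ⟨i, hi⟩ := Function.ne_iff.1 hx
  exact sum_pos' (fun _ _ => by positivity)
    ⟨i, mem_univ i, Real.rpow_pos_of_pos (abs_pos.2 hi) p⟩

lemma powSum_zero (hp : p ≠ 0) : powSum p (0 : ι → ℝ) = 0 := by
  simp [powSum, Real.zero_rpow hp]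

lemma powSum_neg (p : ℝ) (x : ι → ℝ) : powSum p (-x) = powSum p x := by
  simp [powSum]

lemma powSum_rpow_smul (hp : p ≠ 0) {c : ℝ} (hc : 0 ≤ c) (x : ι → ℝ) :
    powSum p (c ^ (1 / p) • x) = c * powSum p x := by
  have hcp : 0 ≤ c ^ (1 / p) := by positivity
  simp_rw [powSum, mul_sum, Pi.smul_apply, smul_eq_mul, abs_mul, abs_of_nonneg hcp,
    Real.mul_rpow hcp (abs_nonneg _), ← Real.rpow_mul hc, one_div_mul_cancel hp, Real.rpow_one]

lemma abs_add_rpow_le (hp0 : 0 ≤ p) (hp1 : p ≤ 1) (a b : ℝ) :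
    |a + b| ^ p ≤ |a| ^ p + |b| ^ p :=
  (Real.rpow_le_rpow (abs_nonneg _) (abs_add_le a b) hp0).trans
    (Real.rpow_add_le_add_rpow (abs_nonneg a) (abs_nonneg b) hp0 hp1)

lemma powSum_add_le (hp0 : 0 ≤ p) (hp1 : p ≤ 1) (x y : ι → ℝ) :
    powSum p (x + y) ≤ powSum p x + powSum p y := by
  simp_rw [powSum, ← sum_add_distrib]
  exact sum_le_sum fun i _ => abs_add_rpow_le hp0 hp1 (x i) (y i)

lemma powSum_sub_le (hp0 : 0 ≤ p) (hp1 : p ≤ 1) (x y : ι → ℝ) :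
    powSum p (x - y) ≤ powSum p x + powSum p y := by
  simpa only [sub_eq_add_neg, powSum_neg] using powSum_add_le hp0 hp1 x (-y)

lemma continuous_powSum (hp : 0 ≤ p) : Continuous (powSum p : (ι → ℝ) → ℝ) :=
  continuous_finsetSum _ fun i _ => (continuous_apply i).abs.rpow_const fun _ => Or.inr hp

lemma abs_le_powSum_rpow (hp : 0 < p) (x : ι → ℝ) (i : ι) : |x i| ≤ powSum p x ^ (1 / p) := by
  rw [one_div, Real.le_rpow_inv_iff_of_pos (abs_nonneg _) (powSum_nonneg p x) hp]
  exact single_le_sum (f := fun i => |x i| ^ p) (fun _ _ => by positivity) (mem_univ i)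

lemma isBounded_setOf_powSum_lt (hp : 0 < p) (r : ℝ) :
    Bornology.IsBounded {x : ι → ℝ | powSum p x < r} := by
  refine (Metric.isBounded_closedBall (x := 0) (r := r ^ (1 / p))).subset fun x hx => ?_
  have hr : 0 ≤ r := (powSum_nonneg p x).trans (le_of_lt hx)
  rw [mem_closedBall_zero_iff, pi_norm_le_iff_of_nonneg (by positivity)]
  exact fun i => (abs_le_powSum_rpow hp x i).trans
    (Real.rpow_le_rpow (powSum_nonneg p x) (le_of_lt hx) (by positivity))

lemma sum_rpow_eq_powSum (hp : p ≠ 0) {S : Finset ι} {x : ι → ℝ} (hx : ∀ i ∉ S, x i = 0) :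
    ∑ i ∈ S, |x i| ^ p = powSum p x :=
  sum_subset (subset_univ S) fun i _ hi => by rw [hx i hi, abs_zero, Real.zero_rpow hp]

lemma powSum_indicator_one (hp : p ≠ 0) (S : Finset ι) :
    powSum p ((S : Set ι).indicator 1) = #S := by
  rw [← sum_rpow_eq_powSum hp fun i hi => Set.indicator_of_notMem (mem_coe.not.2 hi) 1,
    sum_congr rfl fun i hi => by
      rw [Set.indicator_of_mem (mem_coe.2 hi), Pi.one_apply, abs_one, Real.one_rpow],
    sum_const, nsmul_one]

lemma powSum_indicator_one_sub [DecidableEq ι] (hp : p ≠ 0) (S T : Finset ι) :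
    powSum p ((S : Set ι).indicator 1 - (T : Set ι).indicator 1) = #(S ∆ T) := by
  rw [← powSum_indicator_one hp, coe_symmDiff]
  exact sum_congr rfl fun i _ => congrArg (· ^ p) (Set.abs_indicator_symmDiff _ _ 1 i).symm

end PowSum

lemma le_card_symmDiff_of_two_mul_card_inter_le {α : Type*} [DecidableEq α] {s : ℕ}
    {S T : Finset α} (hS : #S = s) (hT : #T = s) (hST : 2 * #(S ∩ T) ≤ s) : s ≤ #(S ∆ T) := by
  have hcard : #(S ∆ T) = #(S \ T) + #(T \ S) :=
    card_union_of_disjoint (disjoint_sdiff_sdiff)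
  have hS' := card_sdiff_add_card_inter S T
  have hT' := card_sdiff_add_card_inter T S
  rw [inter_comm T S] at hT'
  omega

open MeasureTheory in
theorem card_le_pow_finrank_of_pairwiseDisjoint_vadd {E ι : Type*} [NormedAddCommGroup E]
    [NormedSpace ℝ E] [FiniteDimensional ℝ E] {U : Set E} (hUo : IsOpen U) (hUne : U.Nonempty)
    (hUb : Bornology.IsBounded U) {c : ℝ} (hc : 0 ≤ c) {F : Finset ι} {y : ι → E}
    (hdisj : (F : Set ι).PairwiseDisjoint fun i => y i +ᵥ U)
    (hsub : ∀ i ∈ F, y i +ᵥ U ⊆ c • U) :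
    (#F : ℝ) ≤ c ^ Module.finrank ℝ E := by
  borelize E
  let μ : Measure E := Measure.addHaar
  have hvol : #F * μ U ≤ ENNReal.ofReal (c ^ Module.finrank ℝ E) * μ U := by
    calc #F * μ U = μ (⋃ i ∈ F, y i +ᵥ U) := by
          rw [measure_biUnion_finset hdisj fun i _ => (hUo.vadd (y i)).measurableSet]
          simp only [measure_vadd, sum_const, nsmul_eq_mul]
      _ ≤ μ (c • U) := measure_mono (Set.iUnion₂_subset hsub)
      _ = ENNReal.ofReal (c ^ Module.finrank ℝ E) * μ U := Measure.addHaar_smul_of_nonneg μ hc U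
  rw [ENNReal.mul_le_mul_iff_left (hUo.measure_pos μ hUne).ne' hUb.measure_lt_top.ne,
    ← ENNReal.ofReal_natCast] at hvol
  exact (ENNReal.ofReal_le_ofReal_iff (by positivity)).1 hvol

section Quotient

variable {ι κ : Type*} [Fintype ι] {p : ℝ} {K : Submodule ℝ (ι → ℝ)} {F : Finset κ}
  {x : κ → ι → ℝ} {r : ℝ}

lemma pairwiseDisjoint_mkQ_vadd (hp0 : 0 ≤ p) (hp1 : p ≤ 1)
    (hsep : ∀ i ∈ F, ∀ j ∈ F, i ≠ j → ∀ v ∈ K, r ≤ powSum p (x i - x j + v)) :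
    (F : Set κ).PairwiseDisjoint fun i => K.mkQ (x i) +ᵥ K.mkQ '' {b | powSum p b < r / 2} := by
  intro i hi j hj hij
  rw [Function.onFun, Set.disjoint_left]
  rintro - ⟨-, ⟨b, hb, rfl⟩, rfl⟩ ⟨-, ⟨b', hb', rfl⟩, heq⟩
  have hmem : (b' - b) - (x i - x j) ∈ K := by
    rw [← K.ker_mkQ, LinearMap.mem_ker]
    simp only [vadd_eq_add] at heq
    simp only [map_sub]
    rw [sub_sub_sub_comm, ← neg_sub, ← sub_eq_zero.2 heq]
    abel
  have hfar := hsep i hi j hj hij _ hmem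
  rw [add_sub_cancel] at hfar
  have hnear := powSum_sub_le hp0 hp1 b' b
  simp only [Set.mem_ofPred_eq] at hb hb'
  linarith

lemma mkQ_vadd_subset_smul (hp0 : 0 < p) (hp1 : p ≤ 1) {x : ι → ℝ} (hx : powSum p x ≤ r) :
    K.mkQ x +ᵥ K.mkQ '' {b | powSum p b < r / 2} ⊆
      (3 : ℝ) ^ (1 / p) • K.mkQ '' {b | powSum p b < r / 2} := by
  rintro - ⟨-, ⟨b, hb, rfl⟩, rfl⟩
  have hb : powSum p b < r / 2 := hb
  have hsmall : powSum p ((3⁻¹ : ℝ) ^ (1 / p) • (x + b)) < r / 2 := by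
    rw [powSum_rpow_smul hp0.ne' (by norm_num)]
    linarith [powSum_add_le hp0.le hp1 x b]
  refine ⟨_, ⟨_, hsmall, rfl⟩, ?_⟩
  simp only [map_smul, map_add, vadd_eq_add]
  rw [Real.inv_rpow zero_le_three, smul_inv_smul₀ (by positivity)]

theorem card_le_three_rpow_of_separated (hp0 : 0 < p) (hp1 : p ≤ 1) (hr : 0 < r)
    (hx : ∀ i ∈ F, powSum p (x i) ≤ r)
    (hsep : ∀ i ∈ F, ∀ j ∈ F, i ≠ j → ∀ v ∈ K, r ≤ powSum p (x i - x j + v)) :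
    (#F : ℝ) ≤ 3 ^ (Module.finrank ℝ ((ι → ℝ) ⧸ K) / p) := by
  have : IsClosed (K : Set (ι → ℝ)) := K.closed_of_finiteDimensional
  have hopen : IsOpen {b : ι → ℝ | powSum p b < r / 2} :=
    isOpen_lt (continuous_powSum hp0.le) continuous_const
  have hzero : (0 : ι → ℝ) ∈ {b : ι → ℝ | powSum p b < r / 2} := by
    rw [Set.mem_ofPred_eq, powSum_zero hp0.ne']
    positivity
  have hbdd := K.mkQL.lipschitz.isBounded_image (isBounded_setOf_powSum_lt hp0 (r / 2))
  have hcard := card_le_pow_finrank_of_pairwiseDisjoint_vadd (K.isOpenMap_mkQ _ hopen)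
    ⟨_, 0, hzero, rfl⟩ hbdd (by positivity) (pairwiseDisjoint_mkQ_vadd hp0.le hp1 hsep)
    fun i hi => mkQ_vadd_subset_smul hp0 hp1 (hx i hi)
  rwa [← Real.rpow_natCast, ← Real.rpow_mul zero_le_three, one_div_mul_eq_div] at hcard

end Quotient

lemma exists_mem_ne_zero_forall_notMem_eq_zero {𝕜 ι : Type*} [Field 𝕜] [Finite ι]
    (K : Submodule 𝕜 (ι → 𝕜)) {U : Finset ι} (hU : Module.finrank 𝕜 ((ι → 𝕜) ⧸ K) < #U) :
    ∃ v ∈ K, v ≠ 0 ∧ ∀ i ∉ U, v i = 0 := by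
  let extend : (U → 𝕜) →ₗ[𝕜] ι → 𝕜 := Function.ExtendByZero.linearMap 𝕜 Subtype.val
  have hker : (K.mkQ ∘ₗ extend).ker ≠ ⊥ :=
    LinearMap.ker_ne_bot_of_finrank_lt (by simpa using hU)
  obtain ⟨w, hw, hw0⟩ := Submodule.exists_mem_ne_zero_of_ne_bot hker
  have hinj : Function.Injective extend :=
    Function.extend_injective Subtype.val_injective (0 : ι → 𝕜)
  exact ⟨extend w, by simpa using hw, (map_ne_zero_iff extend hinj).2 hw0, fun i hi =>
    Function.extend_apply' w (0 : ι → 𝕜) i fun ⟨j, hj⟩ => hi (hj ▸ j.2)⟩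

/-- The `ℓ^p` null space property of order `t`: no nonzero vector of `K` carries half of its
`p`-th power sum on `t` coordinates. It expresses that `t`-sparse vectors are the unique `ℓ^p`
minimizers in their cosets of `K`. -/
def NullSpaceProperty {ι : Type*} [Fintype ι] (p : ℝ) (t : ℕ) (K : Submodule ℝ (ι → ℝ)) : Prop :=
  ∀ v ∈ K, v ≠ 0 → ∀ S : Finset ι, #S ≤ t → ∑ i ∈ S, |v i| ^ p < powSum p v / 2

namespace NullSpaceProperty

variable {ι : Type*} [Fintype ι] {p : ℝ} {s t : ℕ} {K : Submodule ℝ (ι → ℝ)}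

theorem two_mul_le_finrank_quotient (hp : p ≠ 0) (h : NullSpaceProperty p t K)
    (hK : Module.finrank ℝ ((ι → ℝ) ⧸ K) < Fintype.card ι) :
    2 * t ≤ Module.finrank ℝ ((ι → ℝ) ⧸ K) := by
  classical
  by_contra! hlt
  obtain ⟨U, -, hU⟩ := exists_subset_card_eq (s := (univ : Finset ι)) hK
  obtain ⟨v, hv, hv0, hsupp⟩ :=
    exists_mem_ne_zero_forall_notMem_eq_zero K (hU ▸ Nat.lt_succ_self _ : _ < #U)
  obtain ⟨S, hSU, hS⟩ := exists_subset_card_eq (min_le_right t #U)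
  have hhalf := h v hv hv0 S (hS ▸ min_le_left _ _)
  have hhalf' := h v hv hv0 (U \ S) (by rw [card_sdiff_of_subset hSU]; omega)
  have hsplit := sum_sdiff (f := fun i => |v i| ^ p) hSU
  rw [sum_rpow_eq_powSum hp hsupp] at hsplit
  linarith

lemma powSum_le_powSum_add (hp0 : 0 < p) (hp1 : p ≤ 1) (h : NullSpaceProperty p t K)
    {S : Finset ι} (hS : #S ≤ t) {x : ι → ℝ} (hx : ∀ i ∉ S, x i = 0) {v : ι → ℝ} (hv : v ∈ K) :
    powSum p x ≤ powSum p (x + v) := by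
  classical
  rcases eq_or_ne v 0 with rfl | hv0
  · rw [add_zero]
  have hon : powSum p x ≤ ∑ i ∈ S, |(x + v) i| ^ p + ∑ i ∈ S, |v i| ^ p := by
    rw [← sum_rpow_eq_powSum hp0.ne' hx, ← sum_add_distrib]
    refine sum_le_sum fun i _ => ?_
    simpa using abs_add_rpow_le hp0.le hp1 ((x + v) i) (-v i)
  have hoff : ∑ i ∈ Sᶜ, |(x + v) i| ^ p = ∑ i ∈ Sᶜ, |v i| ^ p :=
    sum_congr rfl fun i hi => by rw [Pi.add_apply, hx i (mem_compl.1 hi), zero_add]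
  have hsplit_add : _ = powSum p (x + v) := sum_add_sum_compl S fun i => |(x + v) i| ^ p
  have hsplit : _ = powSum p v := sum_add_sum_compl S fun i => |v i| ^ p
  linarith [h v hv hv0 S hS]

theorem div_rpow_le_three_rpow (hp0 : 0 < p) (hp1 : p ≤ 1) (hs0 : 0 < s)
    (hs : s ≤ Fintype.card ι) (h : NullSpaceProperty p (2 * s) K) :
    (Fintype.card ι / (4 * s) : ℝ) ^ (s / 2 : ℝ) ≤
      3 ^ (Module.finrank ℝ ((ι → ℝ) ⧸ K) / p) := by
  classical
  obtain ⟨F, hsized, hpair, hcard⟩ := exists_sized_family_rpow_le_card hs0 hs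
  refine hcard.trans (card_le_three_rpow_of_separated (x := fun S => (S : Set ι).indicator 1)
    (r := s) hp0 hp1 (by exact_mod_cast hs0) (fun S hS => ?_) fun S hS T hT hne v hv => ?_)
  · rw [powSum_indicator_one hp0.ne', hsized hS]
  · have hsymm : s ≤ #(S ∆ T) := le_card_symmDiff_of_two_mul_card_inter_le (hsized hS) (hsized hT)
      (hpair hS hT hne).le
    have hunion : #(S ∪ T) ≤ 2 * s := by
      simpa only [hsized hS, hsized hT, two_mul] using card_union_le S T
    calc (s : ℝ) ≤ #(S ∆ T) := by exact_mod_cast hsymm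
      _ = powSum p ((S : Set ι).indicator 1 - (T : Set ι).indicator 1) :=
        (powSum_indicator_one_sub hp0.ne' S T).symm
      _ ≤ _ := h.powSum_le_powSum_add hp0 hp1 hunion (fun i hi => ?_) hv
    rw [mem_union, not_or] at hi
    simp [hi.1, hi.2]

end NullSpaceProperty

/-- The quantity `(2p / log(3⁸e)) · log(eN/m) / m` of the width bound. Its reciprocal bounds, up to
a factor, the sparsity that `m` linear measurements on `ℝ^N` can recover by `ℓ^p` minimization. -/
def sparsityRate (p : ℝ) (N m : ℕ) : ℝ :=
  2 * p / Real.log (3 ^ 8 * Real.exp 1) * Real.log (Real.exp 1 * N / m) / m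

lemma log_three_pow_eight_mul_exp_one : Real.log (3 ^ 8 * Real.exp 1) = 8 * Real.log 3 + 1 := by
  rw [Real.log_mul (by norm_num) (Real.exp_pos 1).ne', Real.log_pow, Real.log_exp, Nat.cast_ofNat]

lemma log_exp_one_mul_div {a b : ℝ} (ha : a ≠ 0) (hb : b ≠ 0) :
    Real.log (Real.exp 1 * a / b) = 1 + Real.log (a / b) := by
  rw [mul_div_assoc, Real.log_mul (Real.exp_pos 1).ne' (div_ne_zero ha hb), Real.log_exp]

lemma sparsityRate_pos {p : ℝ} {N m : ℕ} (hp : 0 < p) (hm : 0 < m) (hmN : m ≤ N) :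
    0 < sparsityRate p N m := by
  have hmR : (0 : ℝ) < m := by exact_mod_cast hm
  have hmNR : (m : ℝ) ≤ N := by exact_mod_cast hmN
  have hlogN : 0 ≤ Real.log (N / m) := Real.log_nonneg ((one_le_div hmR).2 hmNR)
  rw [sparsityRate, log_three_pow_eight_mul_exp_one,
    log_exp_one_mul_div (hmR.trans_le hmNR).ne' hmR.ne']
  positivity

/-- The `1` in `log (e N / m) = 1 + log (N / m)` is paid for by `4 s ≤ m`, the logarithm by the
packing bound; together they produce the constant `log (3⁸ e)`. -/
lemma two_mul_mul_sparsityRate_le_one_of_rpow_le {p : ℝ} {N m s : ℕ} (hp0 : 0 < p)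
    (hp1 : p ≤ 1) (hs : 0 < s) (hsm : 4 * s ≤ m) (hmN : m ≤ N)
    (hpack : (N / (4 * s) : ℝ) ^ (s / 2 : ℝ) ≤ 3 ^ (m / p)) :
    2 * s * sparsityRate p N m ≤ 1 := by
  have hsR : (0 : ℝ) < s := by exact_mod_cast hs
  have hsmR : (4 * s : ℝ) ≤ m := by exact_mod_cast hsm
  have hmR : (0 : ℝ) < m := by linarith
  have hNR : (0 : ℝ) < N := hmR.trans_le (by exact_mod_cast hmN)
  have hlog : p * s * Real.log (N / m) ≤ 2 * m * Real.log 3 := by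
    have h := Real.log_le_log (by positivity) hpack
    rw [Real.log_rpow (by positivity), Real.log_rpow (by norm_num), div_mul_eq_mul_div _ p,
      le_div_iff₀ hp0] at h
    have hmono : Real.log (N / m) ≤ Real.log (N / (4 * s)) := by gcongr
    have := mul_le_mul_of_nonneg_left hmono (by positivity : 0 ≤ p * s)
    linarith
  have hps : p * s ≤ s := mul_le_of_le_one_left hsR.le hp1
  rw [sparsityRate, log_three_pow_eight_mul_exp_one, log_exp_one_mul_div hNR.ne' hmR.ne']
  calc 2 * s * (2 * p / (8 * Real.log 3 + 1) * (1 + Real.log (N / m)) / m)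
      = 4 * (p * s + p * s * Real.log (N / m)) / ((8 * Real.log 3 + 1) * m) := by
        field_simp
        ring
    _ ≤ 1 := by
        rw [div_le_one (by positivity)]
        linarith

theorem NullSpaceProperty.two_mul_mul_sparsityRate_le_one {ι : Type*} [Fintype ι] {p : ℝ}
    {m s : ℕ} {K : Submodule ℝ (ι → ℝ)} (hp0 : 0 < p) (hp1 : p ≤ 1) (hs : 0 < s)
    (h : NullSpaceProperty p (2 * s) K) (hK : Module.finrank ℝ ((ι → ℝ) ⧸ K) ≤ m)
    (hm : m < Fintype.card ι) :
    2 * s * sparsityRate p (Fintype.card ι) m ≤ 1 := by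
  have hdim := h.two_mul_le_finrank_quotient hp0.ne' (hK.trans_lt hm)
  refine two_mul_mul_sparsityRate_le_one_of_rpow_le hp0 hp1 hs (by omega) hm.le ?_
  refine (h.div_rpow_le_three_rpow hp0 hp1 hs (by omega)).trans ?_
  gcongr
  norm_num

lemma mul_inv_toReal_le_one {p : ℝ} {q : ℝ≥0∞} (hp : 0 < p) (hpq : ENNReal.ofReal p ≤ q) :
    p * q⁻¹.toReal ≤ 1 := by
  rcases eq_or_ne q ⊤ with rfl | hq
  · simp
  · have hpr : p ≤ q.toReal := (ENNReal.ofReal_le_iff_le_toReal hq).1 hpq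
    rw [ENNReal.toReal_inv, ← div_eq_mul_inv, div_le_one (hp.trans_le hpr)]
    exact hpr

lemma sum_rpow_le_card_rpow_mul_sum_rpow {ι : Type*} {p r : ℝ} (hp : 0 < p) (hpr : p ≤ r)
    (S : Finset ι) {a : ι → ℝ} (ha : ∀ i ∈ S, 0 ≤ a i) :
    ∑ i ∈ S, a i ^ p ≤ (#S : ℝ) ^ (1 - p / r) * (∑ i ∈ S, a i ^ r) ^ (p / r) := by
  have hr : 0 < r := hp.trans_le hpr
  have hsum : 0 ≤ ∑ i ∈ S, a i ^ p := sum_nonneg fun i hi => Real.rpow_nonneg (ha i hi) p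
  have hsum' : 0 ≤ ∑ i ∈ S, a i ^ r := sum_nonneg fun i hi => Real.rpow_nonneg (ha i hi) r
  have hpow : ∑ i ∈ S, (a i ^ p) ^ (r / p) = ∑ i ∈ S, a i ^ r := sum_congr rfl fun i hi => by
    rw [← Real.rpow_mul (ha i hi), mul_div_cancel₀ _ hp.ne']
  have hmean := Real.rpow_sum_le_const_mul_sum_rpow_of_nonneg S (f := fun i => a i ^ p)
    ((one_le_div hp).2 hpr) fun i hi => Real.rpow_nonneg (ha i hi) p
  rw [hpow] at hmean
  calc ∑ i ∈ S, a i ^ p = ((∑ i ∈ S, a i ^ p) ^ (r / p)) ^ (p / r) := by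
        rw [← Real.rpow_mul hsum, div_mul_div_cancel₀ hp.ne', div_self hr.ne', Real.rpow_one]
    _ ≤ ((#S : ℝ) ^ (r / p - 1) * ∑ i ∈ S, a i ^ r) ^ (p / r) := by gcongr
    _ = (#S : ℝ) ^ (1 - p / r) * (∑ i ∈ S, a i ^ r) ^ (p / r) := by
        rw [Real.mul_rpow (by positivity) hsum', ← Real.rpow_mul (by positivity), sub_mul, one_mul,
          div_mul_div_cancel₀ hp.ne', div_self hr.ne']

section Wnorm

variable {N : ℕ} {q : ℝ≥0∞} {w : Fin N → ℝ}

lemma wnorm_nonneg (hw : 0 ≤ w) (x : Fin N → ℝ) : 0 ≤ wnorm q w x := by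
  have hdiv : ∀ i, 0 ≤ |x i| / w i := fun i => div_nonneg (abs_nonneg _) (hw i)
  unfold wnorm
  split_ifs
  · exact Real.iSup_nonneg hdiv
  · exact Real.rpow_nonneg (sum_nonneg fun i _ => Real.rpow_nonneg (hdiv i) _) _

lemma wnorm_smul (hq : q ≠ 0) (hw : 0 ≤ w) (c : ℝ) (x : Fin N → ℝ) :
    wnorm q w (c • x) = |c| * wnorm q w x := by
  have hdiv : ∀ i, 0 ≤ |x i| / w i := fun i => div_nonneg (abs_nonneg _) (hw i)
  simp only [wnorm, Pi.smul_apply, smul_eq_mul, abs_mul, mul_div_assoc]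
  split_ifs with htop
  · rw [Real.mul_iSup_of_nonneg (abs_nonneg c)]
  · have hr : q.toReal ≠ 0 := (ENNReal.toReal_pos hq htop).ne'
    have hsum : 0 ≤ ∑ i, (|x i| / w i) ^ q.toReal :=
      sum_nonneg fun i _ => Real.rpow_nonneg (hdiv i) _
    simp_rw [Real.mul_rpow (abs_nonneg c) (hdiv _), ← mul_sum]
    rw [Real.mul_rpow (by positivity) hsum, ← Real.rpow_mul (abs_nonneg c), mul_one_div_cancel hr,
      Real.rpow_one]

lemma wnorm_mono (hw : 0 ≤ w) {x y : Fin N → ℝ} (hxy : ∀ i, |x i| ≤ |y i|) :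
    wnorm q w x ≤ wnorm q w y := by
  have hdiv : ∀ i, |x i| / w i ≤ |y i| / w i := fun i => div_le_div_of_nonneg_right (hxy i) (hw i)
  have hnonneg : ∀ i, 0 ≤ |x i| / w i := fun i => div_nonneg (abs_nonneg _) (hw i)
  unfold wnorm
  split_ifs
  · exact ciSup_mono (Set.finite_range _).bddAbove hdiv
  · exact Real.rpow_le_rpow (sum_nonneg fun i _ => Real.rpow_nonneg (hnonneg i) _)
      (sum_le_sum fun i _ => Real.rpow_le_rpow (hnonneg i) (hdiv i) ENNReal.toReal_nonneg)
      (by positivity)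

lemma sum_rpow_le_card_rpow_mul_wnorm_rpow {p : ℝ} (hp : 0 < p) (hpq : ENNReal.ofReal p ≤ q)
    (hw : 0 ≤ w) (S : Finset (Fin N)) (x : Fin N → ℝ) :
    ∑ i ∈ S, (|x i| / w i) ^ p ≤ (#S : ℝ) ^ (1 - p * q⁻¹.toReal) * wnorm q w x ^ p := by
  have hdiv : ∀ i, 0 ≤ |x i| / w i := fun i => div_nonneg (abs_nonneg _) (hw i)
  rcases eq_or_ne q ⊤ with rfl | hq
  · simp only [wnorm, if_true, ENNReal.inv_top, ENNReal.toReal_zero, mul_zero, sub_zero,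
      Real.rpow_one]
    rw [← nsmul_eq_mul]
    refine sum_le_card_nsmul _ _ _ fun i _ => Real.rpow_le_rpow (hdiv i) ?_ hp.le
    exact le_ciSup (f := fun i => |x i| / w i) (Set.finite_range _).bddAbove i
  · have hpr : p ≤ q.toReal := (ENNReal.ofReal_le_iff_le_toReal hq).1 hpq
    have hpow : ∀ i, 0 ≤ (|x i| / w i) ^ q.toReal := fun i => Real.rpow_nonneg (hdiv i) _
    rw [wnorm, if_neg hq, ENNReal.toReal_inv, ← div_eq_mul_inv,
      ← Real.rpow_mul (sum_nonneg fun i _ => hpow i), one_div_mul_eq_div]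
    refine (sum_rpow_le_card_rpow_mul_sum_rpow hp hpr S fun i _ => hdiv i).trans ?_
    gcongr
    · exact sum_nonneg fun i _ => hpow i
    · exact fun i _ _ => hpow i
    · exact subset_univ S

lemma nullSpaceProperty_of_wnorm_le {p T : ℝ} {t : ℕ} {K : Submodule ℝ (Fin N → ℝ)} (hp : 0 < p)
    (hpq : ENNReal.ofReal p ≤ q) (hT : 0 ≤ T)
    (hK : ∀ v ∈ K, wnorm q (fun _ => 1) v ≤ T * powSum p v ^ (1 / p))
    (ht : (t : ℝ) ^ (1 - p * q⁻¹.toReal) * T ^ p < 1 / 2) : NullSpaceProperty p t K := by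
  intro v hv hv0 S hS
  have hpos := powSum_pos (p := p) hv0
  have hexp : 0 ≤ 1 - p * q⁻¹.toReal := sub_nonneg.2 (mul_inv_toReal_le_one hp hpq)
  have hnorm : 0 ≤ wnorm q (fun _ => 1) v := wnorm_nonneg zero_le_one v
  calc ∑ i ∈ S, |v i| ^ p
      ≤ (#S : ℝ) ^ (1 - p * q⁻¹.toReal) * wnorm q (fun _ => 1) v ^ p := by
        simpa only [div_one] using sum_rpow_le_card_rpow_mul_wnorm_rpow (w := fun _ => 1) hp hpq
          zero_le_one S v
    _ ≤ (t : ℝ) ^ (1 - p * q⁻¹.toReal) * (T * powSum p v ^ (1 / p)) ^ p := by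
        gcongr
        exact hK v hv
    _ = (t : ℝ) ^ (1 - p * q⁻¹.toReal) * T ^ p * powSum p v := by
        rw [Real.mul_rpow hT (by positivity), ← Real.rpow_mul hpos.le,
          one_div_mul_cancel hp.ne', Real.rpow_one, mul_assoc]
    _ < 1 / 2 * powSum p v := by gcongr
    _ = powSum p v / 2 := one_div_mul_eq_div _ _

lemma bddAbove_range_wnorm_lpBall {p : ℝ} (hp : 0 < p) (hw : 0 ≤ w) {K : Set (Fin N → ℝ)} :
    BddAbove (Set.range fun x : ↥(lpBall (Fin N) p ∩ K) => wnorm q w x) := by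
  refine ⟨wnorm q w 1, ?_⟩
  rintro - ⟨⟨x, hx, -⟩, rfl⟩
  refine wnorm_mono hw fun i => ?_
  rw [Pi.one_apply, abs_one]
  exact (abs_le_powSum_rpow hp x i).trans hx

end Wnorm

lemma le_iSup_mul_powSum_rpow {ι : Type*} [Fintype ι] {p : ℝ} {K : Submodule ℝ (ι → ℝ)}
    {f : (ι → ℝ) → ℝ} (hp : p ≠ 0) (hf : ∀ (c : ℝ) x, f (c • x) = |c| * f x)
    (hbdd : BddAbove (Set.range fun x : ↥(lpBall ι p ∩ K) => f x)) {v : ι → ℝ} (hv : v ∈ K) :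
    f v ≤ (⨆ x : ↥(lpBall ι p ∩ K), f x) * powSum p v ^ (1 / p) := by
  rcases eq_or_ne v 0 with rfl | hv0
  · have hf0 : f 0 = 0 := by simpa using hf 0 0
    rw [powSum_zero hp, hf0, Real.zero_rpow (one_div_ne_zero hp), mul_zero]
  have hpos := powSum_pos (p := p) hv0
  have hmem : (powSum p v)⁻¹ ^ (1 / p) • v ∈ lpBall ι p ∩ K := by
    refine ⟨?_, K.smul_mem _ hv⟩
    rw [lpBall, Set.mem_ofPred_eq, powSum_rpow_smul hp (inv_nonneg.2 hpos.le),
      inv_mul_cancel₀ hpos.ne', Real.one_rpow]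
  have hle := le_ciSup hbdd ⟨_, hmem⟩
  rw [hf, abs_of_nonneg (by positivity), Real.inv_rpow hpos.le,
    inv_mul_le_iff₀ (by positivity), mul_comm] at hle
  exact hle

lemma two_mul_rpow_mul_rpow_lt_half {p a s μ T : ℝ} (hp : 0 < p) (ha : p * a ≤ 1) (hs : 0 < s)
    (hμ : 0 < μ) (hsμ : s * μ ≤ 1) (hT0 : 0 ≤ T)
    (hT : T < (1 / 2 : ℝ) ^ (2 / p - a) * μ ^ (1 / p - a)) :
    (2 * s) ^ (1 - p * a) * T ^ p < 1 / 2 := by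
  have hTp : T ^ p < (1 / 2 : ℝ) ^ (1 - p * a + 1) * μ ^ (1 - p * a) := by
    have h := Real.rpow_lt_rpow hT0 hT hp
    rw [Real.mul_rpow (by positivity) (by positivity), ← Real.rpow_mul (by norm_num),
      ← Real.rpow_mul hμ.le] at h
    convert h using 3 <;> field_simp
    ring
  calc (2 * s) ^ (1 - p * a) * T ^ p
      < (2 * s) ^ (1 - p * a) * ((1 / 2 : ℝ) ^ (1 - p * a + 1) * μ ^ (1 - p * a)) := by gcongr
    _ = (2 * s * (1 / 2) * μ) ^ (1 - p * a) * (1 / 2) := by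
        rw [Real.rpow_add_one (by norm_num), Real.mul_rpow (x := 2 * s * (1 / 2)) (by positivity)
          hμ.le, Real.mul_rpow (x := 2 * s) (by positivity) (by norm_num)]
        ring
    _ ≤ 1 * (1 / 2) := by
        gcongr
        exact Real.rpow_le_one (by positivity) (by linarith) (by linarith)
    _ = 1 / 2 := one_mul _

theorem nullSpaceProperty_of_iSup_wnorm_lt {N s : ℕ} {p μ : ℝ} {q : ℝ≥0∞}
    {K : Submodule ℝ (Fin N → ℝ)} (hp : 0 < p) (hpq : ENNReal.ofReal p ≤ q) (hs : 0 < s)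
    (hμ : 0 < μ) (hsμ : s * μ ≤ 1)
    (hwidth : ⨆ x : ↥(lpBall (Fin N) p ∩ K), wnorm q (fun _ => 1) (x : Fin N → ℝ) <
      (1 / 2 : ℝ) ^ (2 / p - q⁻¹.toReal) * μ ^ (1 / p - q⁻¹.toReal)) :
    NullSpaceProperty p (2 * s) K := by
  have hq : q ≠ 0 := ((ENNReal.ofReal_pos.2 hp).trans_le hpq).ne'
  have hnonneg : 0 ≤ ⨆ x : ↥(lpBall (Fin N) p ∩ K), wnorm q (fun _ => 1) (x : Fin N → ℝ) :=
    Real.iSup_nonneg fun x => wnorm_nonneg zero_le_one _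
  refine nullSpaceProperty_of_wnorm_le hp hpq hnonneg (fun v hv => ?_) ?_
  · exact le_iSup_mul_powSum_rpow hp.ne' (wnorm_smul hq zero_le_one)
      (bddAbove_range_wnorm_lpBall hp zero_le_one) hv
  · push_cast
    exact two_mul_rpow_mul_rpow_lt_half hp (mul_inv_toReal_le_one hp hpq) (by exact_mod_cast hs)
      hμ hsμ hnonneg hwidth

lemma exists_nat_mul_le_one {μ : ℝ} (hμ0 : 0 < μ) (hμ1 : μ ≤ 1) :
    ∃ s : ℕ, 0 < s ∧ s * μ ≤ 1 ∧ 1 < 2 * s * μ := by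
  have hs : 0 < ⌊1 / μ⌋₊ := Nat.floor_pos.2 ((one_le_div hμ0).2 hμ1)
  refine ⟨⌊1 / μ⌋₊, hs, (le_div_iff₀ hμ0).1 (Nat.floor_le (by positivity)), ?_⟩
  have hlt := Nat.lt_floor_add_one (1 / μ)
  have hone : (1 : ℝ) ≤ ⌊1 / μ⌋₊ := by exact_mod_cast hs
  rw [← div_lt_iff₀ hμ0]
  linarith

lemma finrank_quotient_ker_le {𝕜 V W : Type*} [DivisionRing 𝕜] [AddCommGroup V] [Module 𝕜 V]
    [AddCommGroup W] [Module 𝕜 W] [FiniteDimensional 𝕜 W] (A : V →ₗ[𝕜] W) :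
    Module.finrank 𝕜 (V ⧸ A.ker) ≤ Module.finrank 𝕜 W :=
  A.quotKerEquivRange.finrank_eq.trans_le (Submodule.finrank_le _)

/-- Proposition B.1, lower bound for Gelfand widths of `ℓ^p` balls:
for `0 < p ≤ 1`, `p < q ≤ ∞` and `1 ≤ m < N`,
`d^m(B^p_N, ℓ^q_N) ≥ (1/2)^{2/p - 1/q} (min{1, (2p/log(3^8 e)) log(e N/m)/m})^{1/p - 1/q}`. -/
theorem statement3 {N m : ℕ} (hm1 : 1 ≤ m) (hmN : m < N)
    (p : ℝ) (hp0 : 0 < p) (hp1 : p ≤ 1)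
    (q : ℝ≥0∞) (hpq : ENNReal.ofReal p < q) :
    gelWidth m {x : Fin N → ℝ | (∑ i, |x i| ^ p) ^ (1 / p) ≤ 1} (wnorm q (fun _ => 1)) ≥
      (1 / 2 : ℝ) ^ (2 / p - q⁻¹.toReal) *
        (min 1 ((2 * p / Real.log (3 ^ 8 * Real.exp 1)) *
            Real.log (Real.exp 1 * N / m) / m)) ^ (1 / p - q⁻¹.toReal) := by
  refine le_csInf ⟨_, 0, rfl⟩ ?_
  rintro _ ⟨A, rfl⟩
  by_contra! hwidth
  have hμ : 0 < min 1 (sparsityRate p N m) := lt_min one_pos (sparsityRate_pos hp0 hm1 hmN.le)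
  obtain ⟨s, hs, hsμ, hsμ'⟩ := exists_nat_mul_le_one hμ (min_le_left _ _)
  have hnsp : NullSpaceProperty p (2 * s) A.ker :=
    nullSpaceProperty_of_iSup_wnorm_lt hp0 hpq.le hs hμ hsμ hwidth
  have hcodim : Module.finrank ℝ ((Fin N → ℝ) ⧸ A.ker) ≤ m := by
    simpa using finrank_quotient_ker_le A
  have hrate : 2 * s * sparsityRate p N m ≤ 1 := by
    simpa using hnsp.two_mul_mul_sparsityRate_le_one hp0 hp1 hs hcodim (by simpa using hmN)
  have hmin : 2 * s * min 1 (sparsityRate p N m) ≤ 2 * s * sparsityRate p N m := by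
    gcongr
    exact min_le_right _ _
  linarith

end
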